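/- Let g belong to the disk algebra A(𝔻̄). Then the closure of the algebra ℂ[B,g] in A(𝔻̄) (with respect to the sup norm on the closed disk) contains Γ(g)·A(𝔻̄) = {Γ(g)·h : h ∈ A(𝔻̄)}. -/

import Mathlib

/-!
Write `p_u` for the monic polynomial of degree `n` whose roots are the solutions of `B(w) = u`; its
coefficients are affine in `u`. If these roots are simple and `B(z) = u`, `t = g(z)`, then
`Γ(g)(z) h(z) = ∑_w h(w) ∏_{w' ≠ w} (t - g(w')) / (w - w')`, the sum and products running over the
fiber, because every term with `w ≠ z` contains the factor `t - g(z)`.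

When `g` and `h` inside the sum are replaced by polynomials, the sum becomes a polynomial in `u` and
`t`: the products of the numerators are resultants, hence polynomial in `u`, `t` and `w`, and by
Lagrange interpolation the weighted sum over the roots is the top coefficient of a remainder modulo
`p_u`. Its value at `u = B`, `t = g` thus belongs to `ℂ[B, g]`.

Polynomials are dense in the disk algebra, so the two sums are close wherever the denominators
`p_u'(w) = ∏_{w' ≠ w} (w - w')` are bounded away from `0`. This holds near the unit circle, by
compactness, since on the circle `z B'(z) / B(z) = ∑_j (1 - |a_j|²) / |a_j - z|² > 0`. The maximum
principle carries the estimate to the whole disk.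
-/

open Complex Polynomial MeasureTheory Metric Set Filter Topology
open scoped Classical

noncomputable section

/-- The open unit disk in `ℂ`. -/
def uDisk : Set ℂ := Metric.ball 0 1

/-- The closed unit disk in `ℂ`. -/
def cDisk : Set ℂ := Metric.closedBall 0 1

/-- The finite Blaschke product with zero set `a 0, …, a (n-1)`:
`B(z) = ∏_j (a_j - z)/(1 - conj(a_j)·z)`. -/
def blaschke {n : ℕ} (a : Fin n → ℂ) (z : ℂ) : ℂ :=
  ∏ j, (a j - z) / (1 - (starRingEnd ℂ) (a j) * z)

/-- The multiset of the `n` solutions (with multiplicity) `φ_0(z) = z, φ_1(z), …, φ_{n-1}(z)`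
of `B(w) = B(z)`, realized as the roots of the polynomial equation
`∏_j (a_j - w) = B(z) · ∏_j (1 - conj(a_j)·w)`. -/
def fiberMS {n : ℕ} (a : Fin n → ℂ) (z : ℂ) : Multiset ℂ :=
  ((∏ j, (Polynomial.C (a j) - Polynomial.X)) -
    Polynomial.C (blaschke a z) *
      ∏ j, (1 - Polynomial.C ((starRingEnd ℂ) (a j)) * Polynomial.X)).roots

/-- `𝒟(f)(z) = ∏_{j=1}^{n-1} (f(z) - f(φ_j(z)))`, where `φ_1(z), …, φ_{n-1}(z)` is the
fiber of `B` over `B(z)` with one copy of `z` removed.  In particular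
`calD a id z = ∏_{j=1}^{n-1} (z - φ_j(z))`. -/
def calD {n : ℕ} (a : Fin n → ℂ) (f : ℂ → ℂ) (z : ℂ) : ℂ :=
  (((fiberMS a z).erase z).map (fun w => f z - f w)).prod

/-- `G` is (the holomorphic extension after removing singularities of) `Γ(f) = 𝒟(f)/𝒟`. -/
def IsGamma {n : ℕ} (a : Fin n → ℂ) (f G : ℂ → ℂ) : Prop :=
  DifferentiableOn ℂ G uDisk ∧ ∀ z ∈ uDisk, G z * calD a id z = calD a f z

/-- `p`-th power integral mean of `f` on the circle of radius `r`. -/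
def circMean (p : ℝ) (f : ℂ → ℂ) (r : ℝ) : ℝ :=
  ∫ θ in (0:ℝ)..(2 * Real.pi), ‖f ((r : ℂ) * Complex.exp ((θ : ℂ) * Complex.I))‖ ^ p

/-- The `H^p` norm of `f` (for `0 < p < ∞`). -/
def hpNorm (p : ℝ) (f : ℂ → ℂ) : ℝ :=
  (sSup {m : ℝ | ∃ r ∈ Set.Ico (0:ℝ) 1, m = circMean p f r}) ^ (1 / p)

/-- Membership in the Hardy space `H^p`, `0 < p < ∞`: holomorphic on the disk with
uniformly bounded integral means. -/
def MemHp (p : ℝ) (f : ℂ → ℂ) : Prop :=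
  DifferentiableOn ℂ f uDisk ∧ ∃ C : ℝ, ∀ r ∈ Set.Ico (0:ℝ) 1, circMean p f r ≤ C

/-- Membership in `H^∞`: bounded holomorphic functions on the disk. -/
def MemHinf (f : ℂ → ℂ) : Prop :=
  DifferentiableOn ℂ f uDisk ∧ ∃ C : ℝ, ∀ z ∈ uDisk, ‖f z‖ ≤ C

/-- The `H^∞` (sup) norm. -/
def hinfNorm (f : ℂ → ℂ) : ℝ := sSup {m : ℝ | ∃ z ∈ uDisk, m = ‖f z‖}

/-- The algebra of all polynomials in the functions `F 0, …, F (m-1)`. -/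
def algGen (m : ℕ) (F : Fin m → (ℂ → ℂ)) : Set (ℂ → ℂ) :=
  {h | ∃ P : MvPolynomial (Fin m) ℂ, ∀ z : ℂ, h z = MvPolynomial.eval (fun i => F i z) P}

/-- The algebra `ℂ[F,G]` of all polynomials in the two functions `F` and `G`. -/
def algGen2 (F G : ℂ → ℂ) : Set (ℂ → ℂ) := algGen 2 ![F, G]

/-- The (sequential) closure of `S` in `H^p`. -/
def hpClosure (p : ℝ) (S : Set (ℂ → ℂ)) : Set (ℂ → ℂ) :=
  {f | MemHp p f ∧ ∃ u : ℕ → (ℂ → ℂ), (∀ k, u k ∈ S) ∧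
    Filter.Tendsto (fun k => hpNorm p (fun z => f z - u k z)) Filter.atTop (nhds 0)}

/-- `S` has finite codimension in `H^p`: finitely many functions in `H^p` together with `S`
span all of `H^p`. -/
def FiniteCodimHp (p : ℝ) (S : Set (ℂ → ℂ)) : Prop :=
  ∃ (k : ℕ) (e : Fin k → (ℂ → ℂ)), (∀ i, MemHp p (e i)) ∧
    ∀ f, MemHp p f → ∃ (c : Fin k → ℂ) (s : ℂ → ℂ), s ∈ S ∧
      ∀ z ∈ uDisk, f z = s z + ∑ i, c i * e i z

/-- Inner function: bounded by 1, holomorphic, radial limits of modulus 1 a.e. -/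
def IsInner (f : ℂ → ℂ) : Prop :=
  DifferentiableOn ℂ f uDisk ∧ (∀ z ∈ uDisk, ‖f z‖ ≤ 1) ∧
  ∀ᵐ θ : ℝ ∂volume, ∃ l : ℂ, ‖l‖ = 1 ∧
    Filter.Tendsto (fun r : ℝ => f ((r : ℂ) * Complex.exp ((θ : ℂ) * Complex.I)))
      (nhdsWithin 1 (Set.Iio 1)) (nhds l)

/-- `J` divides `h`, with a quotient holomorphic on the disk. -/
def InnerDivides (J h : ℂ → ℂ) : Prop :=
  ∃ k : ℂ → ℂ, DifferentiableOn ℂ k uDisk ∧ ∀ z ∈ uDisk, h z = J z * k z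

/-- Outer function: a holomorphic function on the disk whose only inner divisors are
unimodular constants (i.e. whose inner part is a unimodular constant). -/
def IsOuter (h : ℂ → ℂ) : Prop :=
  DifferentiableOn ℂ h uDisk ∧
  ∀ J : ℂ → ℂ, IsInner J → InnerDivides J h →
    ∃ c : ℂ, ‖c‖ = 1 ∧ ∀ z ∈ uDisk, J z = c

/-- `I` is the inner part of `h`: `I` is inner and `h = I·F` with `F` outer. -/
def IsInnerPartOf (I h : ℂ → ℂ) : Prop :=
  IsInner I ∧ ∃ F : ℂ → ℂ, IsOuter F ∧ ∀ z ∈ uDisk, h z = I z * F z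

/-- Finite Blaschke product (up to a unimodular constant factor). -/
def IsFiniteBlaschke (f : ℂ → ℂ) : Prop :=
  ∃ (m : ℕ) (c : ℂ) (b : Fin m → ℂ), ‖c‖ = 1 ∧ (∀ i, b i ∈ uDisk) ∧
    ∀ z ∈ uDisk, f z = c * ∏ i, (b i - z) / (1 - (starRingEnd ℂ) (b i) * z)

/-- `h` has no singular inner factor: every zero-free inner divisor of `h` is a
unimodular constant. -/
def NoSingularInnerFactor (h : ℂ → ℂ) : Prop :=
  ∀ J : ℂ → ℂ, IsInner J → (∀ z ∈ uDisk, J z ≠ 0) → InnerDivides J h →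
    ∃ c : ℂ, ‖c‖ = 1 ∧ ∀ z ∈ uDisk, J z = c

/-- The disk algebra `A(𝔻̄)`: continuous on the closed disk, holomorphic on the open disk. -/
def MemDiskAlg (f : ℂ → ℂ) : Prop :=
  ContinuousOn f cDisk ∧ DifferentiableOn ℂ f uDisk

/-- The closure of `S` in the disk algebra, with respect to the sup norm on `𝔻̄`. -/
def daClosure (S : Set (ℂ → ℂ)) : Set (ℂ → ℂ) :=
  {f | MemDiskAlg f ∧ ∀ ε : ℝ, 0 < ε → ∃ h ∈ S, ∀ z ∈ cDisk, ‖f z - h z‖ ≤ ε}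

/-- `S` has finite codimension in the disk algebra `A(𝔻̄)`. -/
def FiniteCodimDA (S : Set (ℂ → ℂ)) : Prop :=
  ∃ (k : ℕ) (e : Fin k → (ℂ → ℂ)), (∀ i, MemDiskAlg (e i)) ∧
    ∀ f, MemDiskAlg f → ∃ (c : Fin k → ℂ) (s : ℂ → ℂ), s ∈ S ∧
      ∀ z ∈ cDisk, f z = s z + ∑ i, c i * e i z

/-! ### Interpolation over the roots of a polynomial -/

section TwistedInterpolation

variable {K : Type*} [Field K]

theorem resultant_nodal (s : Finset K) (G : K[X]) {m : ℕ} (hm : G.natDegree ≤ m) :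
    resultant (Lagrange.nodal s id) G s.card m = ∏ w ∈ s, G.eval w := by
  have hroots : (Lagrange.nodal s id).roots = s.val := roots_prod_X_sub_C s
  have hsplits : (Lagrange.nodal s id).Splits := .prod fun w _ => .X_sub_C w
  have hres := resultant_eq_prod_eval (Lagrange.nodal s id) G m hm hsplits
  rwa [Lagrange.natDegree_nodal, Lagrange.nodal_monic.leadingCoeff, one_pow, one_mul, hroots]
    at hres

variable [DecidableEq K]

/-- Lagrange interpolation of `h` at the nodes `s`, evaluated at `t`, with the factors `t - w'` of
the numerators replaced by `t - g w'`. It is the Lagrange interpolant for `g = id`, and for `s` a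
fiber of `B` it is the function of `B` and `t` through which `Γ(g) h` is approximated. -/
def twistedInterp (s : Finset K) (g h : K → K) (t : K) : K :=
  ∑ w ∈ s, h w * ∏ w' ∈ s.erase w, (t - g w') / (w - w')

theorem twistedInterp_apply_node {s : Finset K} (g h : K → K) {z : K} (hz : z ∈ s) :
    twistedInterp s g h (g z) = h z * ∏ w ∈ s.erase z, (g z - g w) / (z - w) := by
  refine Finset.sum_eq_single_of_mem z hz fun w _ hwz => ?_
  rw [Finset.prod_eq_zero (Finset.mem_erase.2 ⟨hwz.symm, hz⟩) (by simp), mul_zero]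

theorem mul_prod_erase_div_eq_prod_update_div {s : Finset K} {w : K} (hw : w ∈ s) (c : K)
    (f v : K → K) :
    c * ∏ w' ∈ s.erase w, f w' / v w' =
      (∏ w' ∈ s, Function.update f w c w') / ∏ w' ∈ s.erase w, v w' := by
  rw [Finset.prod_update_of_mem hw, Finset.sdiff_singleton_eq_erase, Finset.prod_div_distrib,
    mul_div_assoc]

theorem coeff_modByMonic_nodal (F : K[X]) (s : Finset K) :
    (F %ₘ Lagrange.nodal s id).coeff (s.card - 1) =
      ∑ w ∈ s, F.eval w / ∏ w' ∈ s.erase w, (w - w') := by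
  have hdeg : (F %ₘ Lagrange.nodal s id).degree < s.card :=
    (degree_modByMonic_lt F Lagrange.nodal_monic).trans_eq Lagrange.degree_nodal
  rw [Lagrange.coeff_eq_sum (injOn_id _) hdeg]
  refine Finset.sum_congr rfl fun w hw => ?_
  have hroot : (Lagrange.nodal s id).eval w = 0 := Lagrange.eval_nodal_at_node (v := id) hw
  rw [id, modByMonic_eq_sub_mul_div]
  simp [hroot]

theorem nodal_divByMonic_X_sub_C {s : Finset K} {w : K} (hw : w ∈ s) :
    Lagrange.nodal s id /ₘ (X - C w) = Lagrange.nodal (s.erase w) id := by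
  rw [Lagrange.nodal_eq_mul_nodal_erase hw]
  exact mul_divByMonic_cancel_left _ (monic_X_sub_C w)

variable {S : Type*} [CommRing S] {p : S[X]}

-- The product is the resultant of `G` with `p / (X - w)`, where `w` is the variable of `r`.
theorem exists_eval_map_eq_prod_erase (hp : p.Monic) (G : S[X]) :
    ∃ r : S[X], ∀ (φ : S →+* K) (s : Finset K), p.map φ = Lagrange.nodal s id → ∀ w ∈ s,
      (r.map φ).eval w = ∏ w' ∈ s.erase w, (G.map φ).eval w' := by
  refine ⟨resultant (p.map C /ₘ (X - C X)) (G.map C) (p.natDegree - 1) G.natDegree,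
    fun φ s hps w hw => ?_⟩
  have : Nontrivial S := φ.domain_nontrivial
  have hcard : p.natDegree = s.card := by
    rw [← hp.natDegree_map φ, hps, Lagrange.natDegree_nodal]
  let ψ : S[X] →+* K := eval₂RingHom φ w
  have hψC : ψ.comp C = φ := by ext; simp [ψ]
  have hquot : (p.map C /ₘ (X - C X)).map ψ = Lagrange.nodal (s.erase w) id := by
    rw [map_divByMonic _ (monic_X_sub_C _), Polynomial.map_map, hψC, hps,
      ← nodal_divByMonic_X_sub_C hw]
    simp [ψ]
  rw [eval_map, ← coe_eval₂RingHom, ← resultant_map_map, hquot, Polynomial.map_map, hψC, hcard,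
    ← Finset.card_erase_of_mem hw, resultant_nodal _ _ natDegree_map_le]

theorem exists_map_eq_sum_prod_erase_div (hp : p.Monic) (G H : S[X]) :
    ∃ c : S, ∀ (φ : S →+* K) (s : Finset K), p.map φ = Lagrange.nodal s id →
      φ c = ∑ w ∈ s, (H.map φ).eval w * ∏ w' ∈ s.erase w, (G.map φ).eval w' / (w - w') := by
  obtain ⟨r, hr⟩ := exists_eval_map_eq_prod_erase (K := K) hp G
  refine ⟨((H * r) %ₘ p).coeff (p.natDegree - 1), fun φ s hps => ?_⟩
  have : Nontrivial S := φ.domain_nontrivial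
  rw [← coeff_map, map_modByMonic _ hp, ← hp.natDegree_map φ, hps, Lagrange.natDegree_nodal,
    coeff_modByMonic_nodal]
  refine Finset.sum_congr rfl fun w hw => ?_
  rw [Polynomial.map_mul, eval_mul, hr φ s hps w hw, Finset.prod_div_distrib, mul_div_assoc]

theorem exists_mvPolynomial_eval_eq_twistedInterp {A D : K[X]} (hA : A.Monic)
    (hD : D.degree < A.degree) (g h : K[X]) :
    ∃ P : MvPolynomial (Fin 2) K, ∀ (u t : K) (s : Finset K), A - C u * D = Lagrange.nodal s id →
      MvPolynomial.eval ![u, t] P = twistedInterp s (g.eval ·) (h.eval ·) t := by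
  let ι : K →+* MvPolynomial (Fin 2) K := MvPolynomial.C
  have hdeg : (C (MvPolynomial.X 0) * D.map ι).degree < (A.map ι).degree := by
    rw [hA.degree_map, degree_C_mul (MvPolynomial.X_ne_zero 0)]
    exact degree_map_le.trans_lt hD
  obtain ⟨P, hP⟩ := exists_map_eq_sum_prod_erase_div (K := K) ((hA.map ι).sub_of_left hdeg)
    (C (MvPolynomial.X 1) - g.map ι) (h.map ι)
  refine ⟨P, fun u t s hs => ?_⟩
  have hcomp : (MvPolynomial.eval ![u, t]).comp ι = RingHom.id K := by ext; simp [ι]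
  rw [hP _ s (by simpa [Polynomial.map_map, hcomp] using hs)]
  simp [twistedInterp, Polynomial.map_map, hcomp]

end TwistedInterpolation

section TwistedInterpolationBound

variable {𝕜 : Type*} [NontriviallyNormedField 𝕜]

theorem norm_prod_sub_prod_le {ι : Type*} {s : Finset ι} {f f' : ι → 𝕜} {L τ : ℝ}
    (hf : ∀ i ∈ s, ‖f i‖ ≤ L) (hf' : ∀ i ∈ s, ‖f' i‖ ≤ L) (hff' : ∀ i ∈ s, ‖f i - f' i‖ ≤ τ) :
    ‖∏ i ∈ s, f i - ∏ i ∈ s, f' i‖ ≤ s.card * L ^ (s.card - 1) * τ := by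
  obtain rfl | ⟨i, hi⟩ := s.eq_empty_or_nonempty
  · simp
  have : Nonempty s := ⟨i, hi⟩
  have hL : 0 ≤ L := (norm_nonneg _).trans (hf i hi)
  have hbound := (ContinuousMultilinearMap.mkPiAlgebra 𝕜 s 𝕜).norm_image_sub_le
    (fun j : s => f j) (fun j : s => f' j)
  simp only [ContinuousMultilinearMap.mkPiAlgebra_apply, ContinuousMultilinearMap.norm_mkPiAlgebra,
    one_mul, Fintype.card_coe, Finset.prod_coe_sort] at hbound
  refine hbound.trans ?_
  gcongr
  · exact max_le ((pi_norm_le_iff_of_nonempty _).2 fun j => hf j j.2)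
      ((pi_norm_le_iff_of_nonempty _).2 fun j => hf' j j.2)
  · exact (pi_norm_le_iff_of_nonempty _).2 fun j => hff' j j.2

variable [DecidableEq 𝕜]

theorem norm_twistedInterp_sub_le {s : Finset 𝕜} {g g' h h' : 𝕜 → 𝕜} {t : 𝕜} {δ L τ : ℝ}
    (hδ : 0 < δ) (hsep : ∀ w ∈ s, δ ≤ ‖∏ w' ∈ s.erase w, (w - w')‖)
    (hg : ∀ w ∈ s, ‖t - g w‖ ≤ L) (hh : ∀ w ∈ s, ‖h w‖ ≤ L)
    (hgg' : ∀ w ∈ s, ‖g w - g' w‖ ≤ τ) (hhh' : ∀ w ∈ s, ‖h w - h' w‖ ≤ τ) :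
    ‖twistedInterp s g h t - twistedInterp s g' h' t‖ ≤
      s.card * (s.card * (L + τ) ^ (s.card - 1) * τ / δ) := by
  rw [twistedInterp, twistedInterp, ← Finset.sum_sub_distrib, ← nsmul_eq_mul, ← Finset.sum_const]
  refine norm_sum_le_of_le _ fun w hw => ?_
  set F := Function.update (t - g ·) w (h w)
  set F' := Function.update (t - g' ·) w (h' w)
  have hF : ∀ w' ∈ s, ‖F w'‖ ≤ L := fun w' hw' => by
    obtain rfl | hne := eq_or_ne w' w
    · simpa [F] using hh w' hw'
    · simpa [F, hne] using hg w' hw'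
  have hFF' : ∀ w' ∈ s, ‖F w' - F' w'‖ ≤ τ := fun w' hw' => by
    obtain rfl | hne := eq_or_ne w' w
    · simpa [F, F'] using hhh' w' hw'
    · simpa [F, F', hne, norm_sub_rev] using hgg' w' hw'
  have hnum : ‖∏ w' ∈ s, F w' - ∏ w' ∈ s, F' w'‖ ≤ s.card * (L + τ) ^ (s.card - 1) * τ := by
    have hτ : 0 ≤ τ := (norm_nonneg _).trans (hFF' w hw)
    refine norm_prod_sub_prod_le (fun w' hw' => (hF w' hw').trans (le_add_of_nonneg_right hτ))
      (fun w' hw' => ?_) hFF'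
    calc ‖F' w'‖ ≤ ‖F w'‖ + ‖F w' - F' w'‖ := norm_le_norm_add_norm_sub _ _
      _ ≤ L + τ := add_le_add (hF w' hw') (hFF' w' hw')
  rw [mul_prod_erase_div_eq_prod_update_div hw, mul_prod_erase_div_eq_prod_update_div hw, ← sub_div,
    norm_div]
  exact div_le_div₀ ((norm_nonneg _).trans hnum) hnum hδ (hsep w hw)

end TwistedInterpolationBound

section SimpleRoots

variable {K : Type*} [Field K] {p : K[X]}

theorem nodup_roots_of_eval_derivative_ne_zero
    (h : ∀ w ∈ p.roots, p.derivative.eval w ≠ 0) : p.roots.Nodup := by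
  classical
  obtain rfl | hp := eq_or_ne p 0
  · simp
  refine Multiset.nodup_iff_count_le_one.2 fun w => not_lt.1 fun hw => ?_
  rw [count_roots] at hw
  obtain ⟨hroot, hderiv⟩ := (one_lt_rootMultiplicity_iff_isRoot hp).1 hw
  exact h w (mem_roots'.2 ⟨hp, hroot⟩) hderiv

theorem eq_nodal_toFinset_roots [DecidableEq K] (hmonic : p.Monic) (hsplits : p.Splits)
    (hnodup : p.roots.Nodup) :
    p = Lagrange.nodal p.roots.toFinset id := by
  conv_lhs => rw [hsplits.eq_prod_roots_of_monic hmonic]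
  rw [Lagrange.nodal, Finset.prod, Multiset.toFinset_val, hnodup.dedup]
  rfl

end SimpleRoots

/-! ### The disk algebra -/

theorem mem_uDisk {z : ℂ} : z ∈ uDisk ↔ ‖z‖ < 1 := mem_ball_zero_iff

theorem mem_cDisk {z : ℂ} : z ∈ cDisk ↔ ‖z‖ ≤ 1 := mem_closedBall_zero_iff

theorem uDisk_subset_cDisk : uDisk ⊆ cDisk := ball_subset_closedBall

theorem isCompact_cDisk : IsCompact cDisk := isCompact_closedBall 0 1

namespace MemDiskAlg

variable {f f' : ℂ → ℂ}

theorem of_differentiableAt (hf : ∀ z ∈ cDisk, DifferentiableAt ℂ f z) : MemDiskAlg f :=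
  ⟨fun z hz => (hf z hz).continuousAt.continuousWithinAt,
    fun z hz => (hf z (uDisk_subset_cDisk hz)).differentiableWithinAt⟩

theorem mul (hf : MemDiskAlg f) (hf' : MemDiskAlg f') : MemDiskAlg fun z => f z * f' z :=
  ⟨hf.1.mul hf'.1, hf.2.mul hf'.2⟩

theorem sub (hf : MemDiskAlg f) (hf' : MemDiskAlg f') : MemDiskAlg fun z => f z - f' z :=
  ⟨hf.1.sub hf'.1, hf.2.sub hf'.2⟩

theorem mvPolynomial_eval {σ : Type*} {F : σ → ℂ → ℂ} (hF : ∀ i, MemDiskAlg (F i))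
    (P : MvPolynomial σ ℂ) : MemDiskAlg fun z => MvPolynomial.eval (fun i => F i z) P := by
  induction P using MvPolynomial.induction_on with
  | C c => simpa using ⟨continuousOn_const, differentiableOn_const c⟩
  | add p q hp hq => simpa using ⟨hp.1.add hq.1, hp.2.add hq.2⟩
  | mul_X p i hp => simpa using hp.mul (hF i)

theorem of_mem_algGen2 {φ : ℂ → ℂ} (hf : MemDiskAlg f) (hf' : MemDiskAlg f')
    (hφ : φ ∈ algGen2 f f') : MemDiskAlg φ := by
  obtain ⟨P, hP⟩ := hφ
  rw [funext hP]
  exact mvPolynomial_eval (Fin.forall_fin_two.2 ⟨hf, hf'⟩) P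

theorem norm_le_of_eventually_norm_le (hf : MemDiskAlg f) {ε : ℝ}
    (hε : ∀ w : ℂ, ‖w‖ = 1 → ∀ᶠ z in 𝓝[uDisk] w, ‖f z‖ ≤ ε) {z : ℂ} (hz : z ∈ cDisk) :
    ‖f z‖ ≤ ε := by
  have hcl : closure uDisk = cDisk := closure_ball 0 one_ne_zero
  refine norm_le_of_forall_mem_frontier_norm_le isBounded_ball ⟨hf.2, hcl ▸ hf.1⟩
    (fun w hw => ?_) (hcl ▸ hz : z ∈ closure uDisk)
  have hw1 : ‖w‖ = 1 := by rwa [frontier_ball 0 one_ne_zero, mem_sphere_zero_iff_norm] at hw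
  have hwc : w ∈ cDisk := mem_cDisk.2 hw1.le
  have : (𝓝[uDisk] w).NeBot := mem_closure_iff_nhdsWithin_neBot.1 (hcl ▸ hwc)
  exact le_of_tendsto ((hf.1 w hwc).mono uDisk_subset_cDisk).norm (hε w hw1)

end MemDiskAlg

theorem exists_polynomial_approx_of_differentiableOn_ball {f : ℂ → ℂ} {r R τ : ℝ} (hrR : r < R)
    (hf : DifferentiableOn ℂ f (ball 0 R)) (hτ : 0 < τ) :
    ∃ q : ℂ[X], ∀ z, ‖z‖ ≤ r → ‖f z - q.eval z‖ < τ := by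
  obtain hr | hr := lt_or_ge r 0
  · exact ⟨0, fun z hz => absurd (norm_nonneg z) (by linarith)⟩
  obtain ⟨r', hrr', hr'R⟩ := exists_between hrR
  obtain ⟨r'', hr'r'', hr''R⟩ := exists_between hr'R
  lift r' to NNReal using hr.trans hrr'.le
  lift r'' to NNReal using r'.2.trans hr'r''.le
  rw [NNReal.coe_lt_coe] at hr'r''
  have hseries := (hf.mono (closedBall_subset_ball hr''R)).hasFPowerSeriesOnBall
    (pos_of_gt hr'r'')
  have hunif := hseries.tendstoUniformlyOn (r' := r') (by exact_mod_cast hr'r'')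
  obtain ⟨N, hN⟩ := (Metric.tendstoUniformlyOn_iff.1 hunif τ hτ).exists
  refine ⟨∑ i ∈ Finset.range N, C ((cauchyPowerSeries f 0 r'').coeff i) * X ^ i, fun z hz => ?_⟩
  have heval : (∑ i ∈ Finset.range N, C ((cauchyPowerSeries f 0 r'').coeff i) * X ^ i).eval z =
      (cauchyPowerSeries f 0 r'').partialSum N z := by
    rw [eval_finsetSum, FormalMultilinearSeries.partialSum]
    refine Finset.sum_congr rfl fun i _ => ?_
    rw [FormalMultilinearSeries.apply_eq_pow_smul_coeff, smul_eq_mul, mul_comm]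
    simp only [eval_mul, eval_C, eval_X_pow]
  rw [heval, ← dist_eq_norm]
  simpa only [zero_add] using hN z (mem_ball_zero_iff.2 (hz.trans_lt hrr'))

theorem MemDiskAlg.exists_dilation_approx {f : ℂ → ℂ} (hf : MemDiskAlg f) {τ : ℝ} (hτ : 0 < τ) :
    ∃ ρ ∈ Ioo (0 : ℝ) 1, ∀ z ∈ cDisk, ‖f z - f (ρ * z)‖ < τ := by
  obtain ⟨δ, hδ, hδf⟩ := Metric.uniformContinuousOn_iff.1
    (isCompact_cDisk.uniformContinuousOn_of_continuous hf.1) τ hτ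
  obtain ⟨ρ, hρδ, hρ1⟩ := exists_between (max_lt (sub_lt_self 1 hδ) zero_lt_one)
  obtain ⟨hρδ, hρ0⟩ := max_lt_iff.1 hρδ
  refine ⟨ρ, ⟨hρ0, hρ1⟩, fun z hz => ?_⟩
  have hz1 : ‖z‖ ≤ 1 := mem_cDisk.1 hz
  have hρz : (ρ * z : ℂ) ∈ cDisk := by
    rw [mem_cDisk, norm_mul, Complex.norm_real, Real.norm_of_nonneg hρ0.le]
    exact mul_le_one₀ hρ1.le (norm_nonneg z) hz1
  have hdist : dist z (ρ * z) = (1 - ρ) * ‖z‖ := by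
    rw [dist_eq_norm, ← one_sub_mul, norm_mul, ← ofReal_one, ← ofReal_sub,
      Complex.norm_real, Real.norm_of_nonneg (sub_nonneg.2 hρ1.le)]
  rw [← dist_eq_norm]
  refine hδf z hz _ hρz (hdist ▸ ?_)
  nlinarith [norm_nonneg z]

theorem MemDiskAlg.exists_polynomial_approx {f : ℂ → ℂ} (hf : MemDiskAlg f) {τ : ℝ} (hτ : 0 < τ) :
    ∃ q : ℂ[X], ∀ z ∈ cDisk, ‖f z - q.eval z‖ ≤ τ := by
  obtain ⟨ρ, ⟨hρ0, hρ1⟩, hρ⟩ := hf.exists_dilation_approx (half_pos hτ)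
  obtain ⟨q, hq⟩ := exists_polynomial_approx_of_differentiableOn_ball hρ1 hf.2 (half_pos hτ)
  refine ⟨q.comp (C (ρ : ℂ) * X), fun z hz => ?_⟩
  have hρz : ‖(ρ * z : ℂ)‖ ≤ ρ := by
    rw [norm_mul, Complex.norm_real, Real.norm_of_nonneg hρ0.le]
    exact mul_le_of_le_one_right hρ0.le (mem_cDisk.1 hz)
  calc ‖f z - (q.comp (C (ρ : ℂ) * X)).eval z‖
      = ‖(f z - f (ρ * z)) + (f (ρ * z) - q.eval (ρ * z))‖ := by simp
    _ ≤ ‖f z - f (ρ * z)‖ + ‖f (ρ * z) - q.eval (ρ * z)‖ := norm_add_le _ _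
    _ ≤ τ / 2 + τ / 2 := add_le_add (hρ z hz).le (hq _ hρz).le
    _ = τ := add_halves τ

/-! ### Finite Blaschke products and their fibers -/

section BlaschkeProducts

open scoped ComplexConjugate

section BlaschkeFactor

variable {a z : ℂ}

theorem norm_one_sub_conj_mul_sq_sub_norm_sub_sq (a z : ℂ) :
    ‖1 - conj a * z‖ ^ 2 - ‖a - z‖ ^ 2 = (1 - ‖a‖ ^ 2) * (1 - ‖z‖ ^ 2) := by
  simp only [← normSq_eq_norm_sq, normSq_apply, sub_re, sub_im, mul_re, mul_im, conj_re, conj_im,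
    one_re, one_im]
  ring

theorem one_sub_conj_mul_ne_zero (ha : a ∈ uDisk) (hz : z ∈ cDisk) : 1 - conj a * z ≠ 0 := by
  refine sub_ne_zero.2 fun h => ?_
  have hlt : ‖conj a * z‖ < 1 := by
    rw [norm_mul, norm_conj]
    exact mul_lt_one_of_nonneg_of_lt_one_left (norm_nonneg a) (mem_uDisk.1 ha) (mem_cDisk.1 hz)
  rw [← h, norm_one] at hlt
  exact hlt.false

theorem one_sub_norm_sq_pos (ha : a ∈ uDisk) : 0 < 1 - ‖a‖ ^ 2 :=
  sub_pos.2 (pow_lt_one₀ (norm_nonneg a) (mem_uDisk.1 ha) two_ne_zero)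

theorem norm_sub_lt_norm_one_sub_conj_mul (ha : a ∈ uDisk) (hz : z ∈ uDisk) :
    ‖a - z‖ < ‖1 - conj a * z‖ := by
  refine lt_of_pow_lt_pow_left₀ 2 (norm_nonneg _) (sub_pos.1 ?_)
  rw [norm_one_sub_conj_mul_sq_sub_norm_sub_sq]
  exact mul_pos (one_sub_norm_sq_pos ha) (one_sub_norm_sq_pos hz)

theorem norm_one_sub_conj_mul_le_norm_sub (ha : a ∈ uDisk) (hz : 1 ≤ ‖z‖) :
    ‖1 - conj a * z‖ ≤ ‖a - z‖ := by
  refine le_of_sq_le_sq (sub_nonpos.1 ?_) (norm_nonneg _)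
  rw [norm_one_sub_conj_mul_sq_sub_norm_sub_sq]
  exact mul_nonpos_of_nonneg_of_nonpos (one_sub_norm_sq_pos ha).le
    (sub_nonpos.2 (one_le_pow₀ hz))

theorem norm_one_sub_conj_mul_eq_norm_sub (a : ℂ) (hz : ‖z‖ = 1) :
    ‖1 - conj a * z‖ = ‖a - z‖ := by
  refine (sq_eq_sq₀ (norm_nonneg _) (norm_nonneg _)).1 (sub_eq_zero.1 ?_)
  rw [norm_one_sub_conj_mul_sq_sub_norm_sub_sq, hz]
  ring

theorem mul_logDeriv_blaschkeFactor (ha : a ∈ uDisk) (hz : ‖z‖ = 1) :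
    z * logDeriv (fun x => (a - x) / (1 - conj a * x)) z =
      ((1 - ‖a‖ ^ 2) / ‖a - z‖ ^ 2 : ℝ) := by
  have hden : 1 - conj a * z ≠ 0 := one_sub_conj_mul_ne_zero ha (mem_cDisk.2 hz.le)
  have hnum : a - z ≠ 0 := by
    rwa [← norm_ne_zero_iff, ← norm_one_sub_conj_mul_eq_norm_sub a hz, norm_ne_zero_iff]
  have hzz : z * conj z = 1 := by rw [mul_conj', hz, ofReal_one, one_pow]
  have hlog : z * logDeriv (fun x => (a - x) / (1 - conj a * x)) z =
      (1 - a * conj a) * -z / ((a - z) * (1 - conj a * z)) := by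
    rw [logDeriv_div z hnum hden (by fun_prop) (by fun_prop), logDeriv_apply, logDeriv_apply,
      deriv_const_sub, deriv_id'', deriv_const_sub, deriv_const_mul_id',
      div_sub_div _ _ hnum hden, ← mul_div_assoc]
    ring
  have hden_eq : 1 - conj a * z = -z * conj (a - z) := by
    rw [map_sub]
    linear_combination -hzz
  have hz0 : -z ≠ 0 := neg_ne_zero.2 (left_ne_zero_of_mul_eq_one hzz)
  rw [hlog, hden_eq, mul_left_comm, mul_comm _ (-z), mul_div_mul_left _ _ hz0, mul_conj', mul_conj']
  push_cast
  rfl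

end BlaschkeFactor

section Blaschke

variable {n : ℕ} {a : Fin n → ℂ} {z : ℂ}

theorem differentiableAt_blaschkeFactor {b : ℂ} (hb : b ∈ uDisk) (hz : z ∈ cDisk) :
    DifferentiableAt ℂ (fun x => (b - x) / (1 - conj b * x)) z :=
  .div (by fun_prop) (by fun_prop) (one_sub_conj_mul_ne_zero hb hz)

theorem differentiableAt_blaschke (ha : ∀ j, a j ∈ uDisk) (hz : z ∈ cDisk) :
    DifferentiableAt ℂ (blaschke a) z :=
  .fun_finsetProd fun j _ => differentiableAt_blaschkeFactor (ha j) hz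

theorem memDiskAlg_blaschke (ha : ∀ j, a j ∈ uDisk) : MemDiskAlg (blaschke a) :=
  .of_differentiableAt fun _ => differentiableAt_blaschke ha

theorem norm_blaschke_eq_one (ha : ∀ j, a j ∈ uDisk) (hz : ‖z‖ = 1) : ‖blaschke a z‖ = 1 := by
  rw [blaschke, norm_prod]
  refine Finset.prod_eq_one fun j _ => ?_
  rw [norm_div, ← norm_one_sub_conj_mul_eq_norm_sub (a j) hz]
  exact div_self (norm_ne_zero_iff.2 (one_sub_conj_mul_ne_zero (ha j) (mem_cDisk.2 hz.le)))

theorem norm_blaschke_lt_one [NeZero n] (ha : ∀ j, a j ∈ uDisk) (hz : z ∈ uDisk) :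
    ‖blaschke a z‖ < 1 := by
  have hfactor (j) : ‖(a j - z) / (1 - conj (a j) * z)‖ < 1 := by
    have hlt := norm_sub_lt_norm_one_sub_conj_mul (ha j) hz
    rw [norm_div]
    exact (div_lt_one ((norm_nonneg _).trans_lt hlt)).2 hlt
  rw [blaschke, norm_prod, ← Finset.mul_prod_erase _ _ (Finset.mem_univ 0)]
  exact mul_lt_one_of_nonneg_of_lt_one_left (norm_nonneg _) (hfactor 0)
    (Finset.prod_le_one (fun _ _ => norm_nonneg _) fun j _ => (hfactor j).le)

theorem mul_logDeriv_blaschke (ha : ∀ j, a j ∈ uDisk) (hz : ‖z‖ = 1) :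
    z * logDeriv (blaschke a) z = (∑ j, (1 - ‖a j‖ ^ 2) / ‖a j - z‖ ^ 2 : ℝ) := by
  have hzc : z ∈ cDisk := mem_cDisk.2 hz.le
  have hB : blaschke a z ≠ 0 :=
    norm_ne_zero_iff.1 ((norm_blaschke_eq_one ha hz).trans_ne one_ne_zero)
  have hlog : logDeriv (blaschke a) z =
      ∑ j, logDeriv (fun x => (a j - x) / (1 - conj (a j) * x)) z :=
    logDeriv_prod (Finset.prod_ne_zero_iff.1 hB)
      fun j _ => differentiableAt_blaschkeFactor (ha j) hzc
  rw [hlog, Finset.mul_sum, ofReal_sum]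
  exact Finset.sum_congr rfl fun j _ => mul_logDeriv_blaschkeFactor (ha j) hz

theorem deriv_blaschke_ne_zero [NeZero n] (ha : ∀ j, a j ∈ uDisk) (hz : ‖z‖ = 1) :
    deriv (blaschke a) z ≠ 0 := by
  intro hderiv
  have hsum := mul_logDeriv_blaschke ha hz
  rw [logDeriv_apply, hderiv, zero_div, mul_zero, eq_comm, ofReal_eq_zero] at hsum
  refine (Finset.sum_pos (fun j _ => ?_) Finset.univ_nonempty).ne' hsum
  refine div_pos (one_sub_norm_sq_pos (ha j)) (pow_pos (norm_pos_iff.2 (sub_ne_zero.2 ?_)) 2)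
  rintro h
  exact (mem_uDisk.1 (ha j)).ne (h ▸ hz)

end Blaschke

section Fiber

variable {n : ℕ} {a : Fin n → ℂ} {u w z : ℂ}

/-- The numerator of `blaschke a`, normalized to be monic. -/
def blaschkeNum (a : Fin n → ℂ) : ℂ[X] := ∏ j, (X - C (a j))

/-- The denominator of `blaschke a`, with the sign matching the normalization of `blaschkeNum a`. -/
def blaschkeDenom (a : Fin n → ℂ) : ℂ[X] := ∏ j, (C (conj (a j)) * X - 1)

/-- The polynomial whose roots are the solutions `w` of `B(w) = u`. -/
def fiberPoly (a : Fin n → ℂ) (u : ℂ) : ℂ[X] := blaschkeNum a - C u * blaschkeDenom a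

theorem blaschke_eq_eval_div (a : Fin n → ℂ) (z : ℂ) :
    blaschke a z = (blaschkeNum a).eval z / (blaschkeDenom a).eval z := by
  simp only [blaschke, blaschkeNum, blaschkeDenom, eval_prod, ← Finset.prod_div_distrib]
  refine Finset.prod_congr rfl fun j _ => ?_
  simp [← neg_div_neg_eq (a j - z)]

theorem eval_blaschkeDenom_ne_zero (ha : ∀ j, a j ∈ uDisk) (hz : z ∈ cDisk) :
    (blaschkeDenom a).eval z ≠ 0 := by
  simp only [blaschkeDenom, eval_prod, eval_sub, eval_mul, eval_C, eval_X, eval_one]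
  refine Finset.prod_ne_zero_iff.2 fun j _ => ?_
  rw [← neg_sub]
  exact neg_ne_zero.2 (one_sub_conj_mul_ne_zero (ha j) hz)

theorem eval_fiberPoly (ha : ∀ j, a j ∈ uDisk) (u : ℂ) (hz : z ∈ cDisk) :
    (fiberPoly a u).eval z = (blaschkeDenom a).eval z * (blaschke a z - u) := by
  have hden := eval_blaschkeDenom_ne_zero ha hz
  rw [blaschke_eq_eval_div, fiberPoly, mul_sub, mul_div_cancel₀ _ hden]
  simp [mul_comm]

theorem isRoot_fiberPoly_iff (ha : ∀ j, a j ∈ uDisk) (hz : z ∈ cDisk) :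
    (fiberPoly a u).IsRoot z ↔ blaschke a z = u := by
  rw [IsRoot, eval_fiberPoly ha u hz, mul_eq_zero, sub_eq_zero,
    or_iff_right (eval_blaschkeDenom_ne_zero ha hz)]

theorem mem_uDisk_of_isRoot_fiberPoly (ha : ∀ j, a j ∈ uDisk) (hu : ‖u‖ < 1)
    (hw : (fiberPoly a u).IsRoot w) : w ∈ uDisk := by
  by_contra hwu
  have hw1 : 1 ≤ ‖w‖ := not_lt.1 fun h => hwu (mem_uDisk.2 h)
  have hroot : (blaschkeNum a).eval w = u * (blaschkeDenom a).eval w := by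
    simpa [fiberPoly, sub_eq_zero] using hw
  have hnum : (blaschkeNum a).eval w ≠ 0 := by
    simp only [blaschkeNum, eval_prod, eval_sub, eval_X, eval_C]
    exact Finset.prod_ne_zero_iff.2 fun j _ => sub_ne_zero.2 fun h => hwu (h ▸ ha j)
  have hle : ‖(blaschkeDenom a).eval w‖ ≤ ‖(blaschkeNum a).eval w‖ := by
    simp only [blaschkeNum, blaschkeDenom, eval_prod, norm_prod, eval_sub, eval_mul, eval_X, eval_C,
      eval_one, norm_sub_rev _ (1 : ℂ), norm_sub_rev w]
    exact Finset.prod_le_prod (fun _ _ => norm_nonneg _)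
      fun j _ => norm_one_sub_conj_mul_le_norm_sub (ha j) hw1
  have hpos : 0 < ‖(blaschkeNum a).eval w‖ := norm_pos_iff.2 hnum
  rw [hroot, norm_mul] at hle hpos
  nlinarith [pos_of_mul_pos_right hpos (norm_nonneg u)]

theorem monic_blaschkeNum (a : Fin n → ℂ) : (blaschkeNum a).Monic := monic_prod_X_sub_C a _

theorem natDegree_blaschkeNum (a : Fin n → ℂ) : (blaschkeNum a).natDegree = n := by
  simp [blaschkeNum]

theorem natDegree_blaschkeDenom_lt {i : Fin n} (hi : a i = 0) :
    (blaschkeDenom a).natDegree < (blaschkeNum a).natDegree := by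
  have hle (j) : (C (conj (a j)) * X - 1 : ℂ[X]).natDegree ≤ 1 := by compute_degree
  have hlt : (C (conj (a i)) * X - 1 : ℂ[X]).natDegree < 1 := by simp [hi]
  calc (blaschkeDenom a).natDegree
      ≤ ∑ j, (C (conj (a j)) * X - 1 : ℂ[X]).natDegree := natDegree_prod_le _ _
    _ < ∑ _j : Fin n, 1 :=
      Finset.sum_lt_sum (fun j _ => hle j) ⟨i, Finset.mem_univ i, hlt⟩
    _ = (blaschkeNum a).natDegree := by simp [natDegree_blaschkeNum]

theorem natDegree_C_mul_blaschkeDenom_lt {i : Fin n} (hi : a i = 0) (u : ℂ) :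
    (C u * blaschkeDenom a).natDegree < (blaschkeNum a).natDegree :=
  (natDegree_C_mul_le _ _).trans_lt (natDegree_blaschkeDenom_lt hi)

theorem monic_fiberPoly {i : Fin n} (hi : a i = 0) (u : ℂ) : (fiberPoly a u).Monic :=
  (monic_blaschkeNum a).sub_of_left (degree_lt_degree (natDegree_C_mul_blaschkeDenom_lt hi u))

theorem natDegree_fiberPoly {i : Fin n} (hi : a i = 0) (u : ℂ) : (fiberPoly a u).natDegree = n := by
  rw [fiberPoly, natDegree_sub_eq_left_of_natDegree_lt (natDegree_C_mul_blaschkeDenom_lt hi u),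
    natDegree_blaschkeNum]

theorem fiberMS_eq_roots_fiberPoly (a : Fin n → ℂ) (z : ℂ) :
    fiberMS a z = (fiberPoly a (blaschke a z)).roots := by
  have hsign : (∏ j, (C (a j) - X)) - C (blaschke a z) * ∏ j, (1 - C (conj (a j)) * X) =
      C ((-1) ^ n) * fiberPoly a (blaschke a z) := by
    simp only [fiberPoly, blaschkeNum, blaschkeDenom, ← neg_sub X, ← neg_sub _ (1 : ℂ[X]),
      Finset.prod_neg, Finset.card_univ, Fintype.card_fin]
    simp only [map_pow, map_neg, map_one]
    ring
  rw [fiberMS, hsign, roots_C_mul _ (pow_ne_zero n (neg_ne_zero.2 one_ne_zero))]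

theorem eval_derivative_fiberPoly (ha : ∀ j, a j ∈ uDisk) (hw : w ∈ cDisk) :
    (fiberPoly a (blaschke a w)).derivative.eval w =
      (blaschkeDenom a).eval w * deriv (blaschke a) w := by
  have hden := eval_blaschkeDenom_ne_zero ha hw
  have hderiv := ((blaschkeNum a).hasDerivAt w).fun_div ((blaschkeDenom a).hasDerivAt w) hden
  rw [← funext (blaschke_eq_eval_div a)] at hderiv
  rw [hderiv.deriv, blaschke_eq_eval_div, fiberPoly]
  simp only [derivative_sub, derivative_C_mul, eval_sub, eval_mul, eval_C]
  field_simp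

theorem continuousOn_eval_derivative_fiberPoly (ha : ∀ j, a j ∈ uDisk) :
    ContinuousOn (fun w => (fiberPoly a (blaschke a w)).derivative.eval w) cDisk := by
  have hB := (memDiskAlg_blaschke ha).1
  simp only [fiberPoly, derivative_sub, derivative_C_mul, eval_sub, eval_mul, eval_C]
  fun_prop

theorem exists_eval_derivative_fiberPoly_bound [NeZero n] (ha : ∀ j, a j ∈ uDisk) :
    ∃ η < (1 : ℝ), ∃ δ > (0 : ℝ), ∀ w ∈ cDisk, η < ‖blaschke a w‖ →
      δ ≤ ‖(fiberPoly a (blaschke a w)).derivative.eval w‖ := by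
  have hcont : ContinuousOn (fun w => max (1 - ‖blaschke a w‖)
      ‖(fiberPoly a (blaschke a w)).derivative.eval w‖) cDisk :=
    .sup (continuousOn_const.sub (memDiskAlg_blaschke ha).1.norm)
      (continuousOn_eval_derivative_fiberPoly ha).norm
  have hpos : ∀ w ∈ cDisk, 0 < max (1 - ‖blaschke a w‖)
      ‖(fiberPoly a (blaschke a w)).derivative.eval w‖ := by
    intro w hw
    obtain hlt | heq := (mem_cDisk.1 hw).lt_or_eq
    · exact lt_max_of_lt_left (sub_pos.2 (norm_blaschke_lt_one ha (mem_uDisk.2 hlt)))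
    · refine lt_max_of_lt_right (norm_pos_iff.2 ?_)
      rw [eval_derivative_fiberPoly ha hw]
      exact mul_ne_zero (eval_blaschkeDenom_ne_zero ha hw) (deriv_blaschke_ne_zero ha heq)
  obtain ⟨δ, hδ, hδw⟩ := isCompact_cDisk.exists_forall_le' hcont hpos
  refine ⟨1 - δ, sub_lt_self 1 hδ, δ, hδ, fun w hw hηw => ?_⟩
  exact (le_max_iff.1 (hδw w hw)).resolve_left (by linarith)

/-- `s` is the fiber `B⁻¹(B(z))`, it consists of `n` simple points of the open disk, and the
derivative `∏_{w' ≠ w} (w - w')` of the fiber polynomial is at least `δ` in modulus at each of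
them. -/
structure IsSeparatedFiber (a : Fin n → ℂ) (δ : ℝ) (z : ℂ) (s : Finset ℂ) : Prop where
  mem : z ∈ s
  subset_uDisk : ↑s ⊆ uDisk
  fiberPoly_eq : fiberPoly a (blaschke a z) = Lagrange.nodal s id
  le_norm_prod : ∀ w ∈ s, δ ≤ ‖∏ w' ∈ s.erase w, (w - w')‖

theorem exists_isSeparatedFiber {i : Fin n} (hi : a i = 0) (ha : ∀ j, a j ∈ uDisk) :
    ∃ η < (1 : ℝ), ∃ δ > (0 : ℝ), ∀ z ∈ uDisk, η < ‖blaschke a z‖ →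
      ∃ s, IsSeparatedFiber a δ z s := by
  have : NeZero n := ⟨i.pos.ne'⟩
  obtain ⟨η, hη, δ, hδ, hbound⟩ := exists_eval_derivative_fiberPoly_bound ha
  refine ⟨η, hη, δ, hδ, fun z hz hηz => ?_⟩
  set p := fiberPoly a (blaschke a z) with hp
  have hmonic : p.Monic := monic_fiberPoly hi _
  have hmem {w : ℂ} (hw : w ∈ p.roots) : w ∈ uDisk :=
    mem_uDisk_of_isRoot_fiberPoly ha (norm_blaschke_lt_one ha hz) (isRoot_of_mem_roots hw)
  have hderiv {w : ℂ} (hw : w ∈ p.roots) : δ ≤ ‖p.derivative.eval w‖ := by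
    have hwc : w ∈ cDisk := uDisk_subset_cDisk (hmem hw)
    have hBw : blaschke a w = blaschke a z :=
      (isRoot_fiberPoly_iff ha hwc).1 (isRoot_of_mem_roots hw)
    rw [hp, ← hBw]
    exact hbound w hwc (hBw ▸ hηz)
  have hnodup : p.roots.Nodup := nodup_roots_of_eval_derivative_ne_zero fun w hw =>
    norm_pos_iff.1 (hδ.trans_le (hderiv hw))
  have hnodal := eq_nodal_toFinset_roots hmonic (IsAlgClosed.splits p) hnodup
  refine ⟨p.roots.toFinset, ?_, fun w hw => hmem (Multiset.mem_toFinset.1 hw), hnodal,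
    fun w hw => ?_⟩
  · rw [Multiset.mem_toFinset, mem_roots hmonic.ne_zero]
    exact (isRoot_fiberPoly_iff ha (uDisk_subset_cDisk hz)).2 rfl
  · have hprod : p.derivative.eval w = ∏ w' ∈ p.roots.toFinset.erase w, (w - w') := by
      conv_lhs => rw [hnodal]
      exact (Lagrange.eval_nodal_derivative_eval_node_eq (v := id) hw).trans Lagrange.eval_nodal
    exact hprod ▸ hderiv (Multiset.mem_toFinset.1 hw)

namespace IsSeparatedFiber

variable {δ : ℝ} {s : Finset ℂ}

theorem card_eq (hs : IsSeparatedFiber a δ z s) {i : Fin n} (hi : a i = 0) : s.card = n := by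
  rw [← natDegree_fiberPoly hi (blaschke a z), hs.fiberPoly_eq, Lagrange.natDegree_nodal]

theorem calD_eq (hs : IsSeparatedFiber a δ z s) (f : ℂ → ℂ) :
    calD a f z = ∏ w ∈ s.erase z, (f z - f w) := by
  have hroots : fiberMS a z = s.val := by
    rw [fiberMS_eq_roots_fiberPoly, hs.fiberPoly_eq]
    exact roots_prod_X_sub_C s
  rw [calD, hroots, ← Finset.erase_val]
  rfl

theorem gamma_mul_eq_twistedInterp (hs : IsSeparatedFiber a δ z s) {g : ℂ → ℂ} {γ : ℂ}
    (hγ : γ * calD a id z = calD a g z) (h : ℂ → ℂ) :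
    γ * h z = twistedInterp s g h (g z) := by
  have hprod : ∏ w ∈ s.erase z, (z - w) ≠ 0 :=
    Finset.prod_ne_zero_iff.2 fun w hw => sub_ne_zero.2 (Finset.ne_of_mem_erase hw).symm
  rw [hs.calD_eq, hs.calD_eq] at hγ
  rw [twistedInterp_apply_node g h hs.mem, Finset.prod_div_distrib, ← hγ, mul_comm]
  exact congrArg (h z * ·) (mul_div_cancel_right₀ γ hprod).symm

end IsSeparatedFiber

theorem mem_algGen2 (F G : ℂ → ℂ) (P : MvPolynomial (Fin 2) ℂ) :
    (fun z => MvPolynomial.eval ![F z, G z] P) ∈ algGen2 F G := by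
  refine ⟨P, fun z => congrArg (MvPolynomial.eval · P) (funext fun i => ?_)⟩
  fin_cases i <;> rfl

theorem exists_mem_algGen2_norm_twistedInterp_sub_le {i : Fin n} (hi : a i = 0) {g h : ℂ → ℂ}
    (hg : MemDiskAlg g) (hh : MemDiskAlg h) {δ ε : ℝ} (hδ : 0 < δ) (hε : 0 < ε) :
    ∃ φ ∈ algGen2 (blaschke a) g, ∀ z s, IsSeparatedFiber a δ z s →
      ‖twistedInterp s g h (g z) - φ z‖ ≤ ε := by
  obtain ⟨M, hM⟩ := isCompact_cDisk.exists_bound_of_continuousOn hg.1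
  obtain ⟨N, hN⟩ := isCompact_cDisk.exists_bound_of_continuousOn hh.1
  set L := max (M + M) N
  have hsmall : ∀ᶠ τ in 𝓝[>] (0 : ℝ), n * (n * (L + τ) ^ (n - 1) * τ / δ) < ε :=
    ((Continuous.tendsto' (by fun_prop) 0 0 (by simp)).eventually_lt_const hε).filter_mono
      nhdsWithin_le_nhds
  obtain ⟨τ, hτε, hτ⟩ := (hsmall.and self_mem_nhdsWithin).exists
  obtain ⟨p, hp⟩ := hg.exists_polynomial_approx hτ
  obtain ⟨q, hq⟩ := hh.exists_polynomial_approx hτ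
  obtain ⟨P, hP⟩ := exists_mvPolynomial_eval_eq_twistedInterp (monic_blaschkeNum a)
    (degree_lt_degree (natDegree_blaschkeDenom_lt hi)) p q
  refine ⟨_, mem_algGen2 (blaschke a) g P, fun z s hs => ?_⟩
  have hsc {w} (hw : w ∈ s) : w ∈ cDisk := uDisk_subset_cDisk (hs.subset_uDisk hw)
  rw [hP _ _ s hs.fiberPoly_eq]
  refine (norm_twistedInterp_sub_le (L := L) (τ := τ) hδ hs.le_norm_prod
    (fun w hw => (norm_sub_le_of_le (hM z (hsc hs.mem)) (hM w (hsc hw))).trans (le_max_left _ _))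
    (fun w hw => (hN w (hsc hw)).trans (le_max_right _ _))
    (fun w hw => hp w (hsc hw)) fun w hw => hq w (hsc hw)).trans ?_
  rw [hs.card_eq hi]
  exact hτε.le

end Fiber

end BlaschkeProducts

/-- **Theorem E(1).** For `g` in the disk algebra, the closure of `ℂ[B,g]`
in `A(𝔻̄)` contains `Γ(g)·A(𝔻̄)`. -/
theorem stmt17 {n : ℕ} (hn : 2 ≤ n) (a : Fin n → ℂ) (ha : ∀ j, a j ∈ uDisk)
    (ha0 : a ⟨0, by omega⟩ = 0)
    (g Γg : ℂ → ℂ) (hg : MemDiskAlg g)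
    (hΓda : MemDiskAlg Γg) (hΓeq : ∀ z ∈ uDisk, Γg z * calD a id z = calD a g z)
    (h : ℂ → ℂ) (hh : MemDiskAlg h) :
    (fun z => Γg z * h z) ∈ daClosure (algGen2 (blaschke a) g) := by
  refine ⟨hΓda.mul hh, fun ε hε => ?_⟩
  obtain ⟨η, hη, δ, hδ, hfiber⟩ := exists_isSeparatedFiber ha0 ha
  obtain ⟨φ, hφ, hφε⟩ := exists_mem_algGen2_norm_twistedInterp_sub_le ha0 hg hh hδ hε
  have hB : MemDiskAlg (blaschke a) := memDiskAlg_blaschke ha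
  have hdiff : MemDiskAlg fun z => Γg z * h z - φ z := (hΓda.mul hh).sub (hB.of_mem_algGen2 hg hφ)
  refine ⟨φ, hφ, fun z => hdiff.norm_le_of_eventually_norm_le fun w hw => ?_⟩
  have hBw : ContinuousAt (blaschke a) w :=
    (differentiableAt_blaschke ha (mem_cDisk.2 hw.le)).continuousAt
  have hnear : ∀ᶠ z in 𝓝[uDisk] w, η < ‖blaschke a z‖ :=
    hBw.norm.continuousWithinAt.eventually_const_lt (hη.trans_eq (norm_blaschke_eq_one ha hw).symm)
  filter_upwards [self_mem_nhdsWithin, hnear] with z hz hηz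
  obtain ⟨s, hs⟩ := hfiber z hz hηz
  rw [hs.gamma_mul_eq_twistedInterp (hΓeq z hz) h]
  exact hφε z s hs
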